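/- arXiv:0803.3373 — 6 statements merged into one kernel-verified Lean document; each statement's English description precedes it below -/
import Mathlib

section
/- Let k be a field and let X₀, X₁, X₂, … be integral, separated schemes of finite type over k (varieties over k). Suppose given morphisms f_i : X_i → X_{i−1} (for i ≥ 1) over k which are proper and surjective, and a variety Y over k together with surjective morphisms g_i : Y → X_i (for i ≥ 0) over k such that f_i ∘ g_i = g_{i−1} for every i ≥ 1. Then there exists i₀ such that for every i ≥ i₀ the morphism f_i is an isomorphism. -/
open AlgebraicGeometry CategoryTheory

theorem aux_C (P P2 K K2 L : Type*) [CommRing P] [IsNoetherianRing P] [CommRing P2] [IsDomain P2] [IsNoetherianRing P2]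
    [IsIntegrallyClosed P2] [Field K] [Field K2] [Field L]
    [Algebra P K] [IsDomain P] [IsFractionRing P K] [Algebra P L] [Algebra K L] [IsScalarTower P K L]
    [Algebra P2 K2] [IsFractionRing P2 K2] [Algebra P2 L] [Algebra K2 L] [IsScalarTower P2 K2 L]
    (p e : ℕ) [ExpChar L p] (ψ : P →+* P2) (hψfin : ψ.Finite)
    (hψ : ∀ x, algebraMap P2 L (ψ x) = (algebraMap P L x) ^ (p ^ e))
    (s : Set L) (hsfin : s.Finite) (hs : IntermediateField.adjoin K s = ⊤)
    (hsep : ∀ a ∈ s, IsSeparable K2 (a ^ (p ^ e))) :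
    IsNoetherian P (integralClosure P L) := by
  let φ : L →+* L := iterateFrobenius L p e
  have hφ (x : L) : φ x = x ^ (p ^ e) := rfl
  let L2 : IntermediateField K2 L := IntermediateField.adjoin K2 (φ '' s)
  have : FiniteDimensional K2 L2 := by
    have := (hsfin.image φ).to_subtype
    refine IntermediateField.finiteDimensional_adjoin ?_
    rintro _ ⟨a, ha, rfl⟩
    exact (hsep a ha).isIntegral
  have : Algebra.IsSeparable K2 L2 := by
    rw [IntermediateField.isSeparable_adjoin_iff_isSeparable]
    rintro _ ⟨a, ha, rfl⟩
    exact hsep a ha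
  have hL2 (x : L) : φ x ∈ L2 := by
    have hx : x ∈ IntermediateField.adjoin K s := by rw [hs]; trivial
    induction hx using IntermediateField.adjoin_induction with
    | mem x hx => exact IntermediateField.subset_adjoin _ _ ⟨x, hx, rfl⟩
    | algebraMap x =>
      obtain ⟨a, b, hb, rfl⟩ := IsFractionRing.div_surjective (A := P) x
      have (a : P) : φ (algebraMap P L a) ∈ L2 := by
        rw [hφ, ← hψ, IsScalarTower.algebraMap_apply P2 K2 L]
        exact L2.algebraMap_mem _
      rw [map_div₀, ← IsScalarTower.algebraMap_apply, ← IsScalarTower.algebraMap_apply, map_div₀]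
      exact div_mem (this a) (this b)
    | add x y _ _ hx hy => rw [map_add]; exact add_mem hx hy
    | inv x _ hx => rw [map_inv₀]; exact inv_mem hx
    | mul x y _ _ hx hy => rw [map_mul]; exact mul_mem hx hy
  have hT : IsNoetherian P2 (integralClosure P2 L2) :=
    IsIntegralClosure.isNoetherian P2 K2 L2 _
  have hint (x : L) (hx : IsIntegral P x) : IsIntegral P2 (⟨φ x, hL2 x⟩ : L2) := by
    have : IsIntegral P2 (φ x) := by
      obtain ⟨f, hf, h⟩ := hx
      refine ⟨f.map ψ, hf.map _, ?_⟩
      have := congrArg φ h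
      rw [Polynomial.hom_eval₂, map_zero] at this
      rw [Polynomial.eval₂_map, ← this]
      congr 1
      ext y
      exact hψ y
    exact (isIntegral_algHom_iff (L2.val.restrictScalars P2) L2.val.injective).mp this
  algebraize [ψ]
  let : Module P (integralClosure P2 L2) := Module.compHom _ ψ
  have hsm (a : P) (t : integralClosure P2 L2) : a • t = ψ a • t := rfl
  have : IsScalarTower P P2 (integralClosure P2 L2) := ⟨fun a b t => by
    rw [hsm, smul_smul, show a • b = ψ a * b from rfl]⟩
  have : Module.Finite P (integralClosure P2 L2) := Module.Finite.trans P2 _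
  have : IsNoetherian P (integralClosure P2 L2) := isNoetherian_of_isNoetherianRing_of_finite _ _
  let θ : integralClosure P L →ₗ[P] integralClosure P2 L2 :=
    { toFun := fun x => ⟨⟨φ x, hL2 x⟩, hint x x.2⟩
      map_add' := fun x y => by
        apply Subtype.ext; apply Subtype.ext
        exact map_add φ _ _
      map_smul' := fun a x => by
        apply Subtype.ext; apply Subtype.ext
        change φ (a • (x : L)) = ψ a • φ x
        rw [Algebra.smul_def, Algebra.smul_def, map_mul, hψ, hφ] }
  refine isNoetherian_of_injective θ fun x y hxy => ?_
  apply Subtype.ext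
  apply φ.injective
  exact congrArg (fun z : integralClosure P2 L2 => ((z : L2) : L)) hxy


theorem aux_D (P P2 K L : Type*) [CommRing P] [IsNoetherianRing P] [CommRing P2] [IsDomain P2]
    [IsNoetherianRing P2] [IsIntegrallyClosed P2] [Field K] [Field L]
    [Algebra P K] [IsDomain P] [IsFractionRing P K] [Algebra P L] [Algebra K L] [IsScalarTower P K L]
    (p e : ℕ) [ExpChar L p] (ι : P2 →+* P) (hι : Function.Injective ι)
    (hPL : Function.Injective (algebraMap P L)) (ψ : P →+* P2) (hψfin : ψ.Finite)
    (hψ : ∀ x, ι (ψ x) = x ^ (p ^ e))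
    (s : Set L) (hsfin : s.Finite) (hs : IntermediateField.adjoin K s = ⊤)
    (hM : ∀ a ∈ s, ∃ M2 : Polynomial P2, ((M2.map ι).map (algebraMap P L)).Separable ∧
      Polynomial.aeval (a ^ (p ^ e)) (M2.map ι) = 0) :
    IsNoetherian P (integralClosure P L) := by
  let : Algebra P2 L := ((algebraMap P L).comp ι).toAlgebra
  have hP2L (x : P2) : algebraMap P2 L x = algebraMap P L (ι x) := rfl
  have hP2Linj : Function.Injective (algebraMap P2 L) := hPL.comp hι
  let K2 := FractionRing P2
  let : Algebra K2 L := (IsFractionRing.lift (K := K2) hP2Linj).toAlgebra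
  have : IsScalarTower P2 K2 L := IsScalarTower.of_algebraMap_eq' (by
    exact RingHom.ext fun x => (IsFractionRing.lift_algebraMap hP2Linj x).symm)
  refine aux_C P P2 K K2 L p e ψ hψfin (fun x => by rw [hP2L, hψ, map_pow]) s hsfin hs ?_
  intro a ha
  obtain ⟨M2, hM1, hM2⟩ := hM a ha
  have h1 : (M2.map (algebraMap P2 K2)).Separable := by
    rw [Polynomial.map_map] at hM1
    change (M2.map (algebraMap P2 L)).Separable at hM1
    rw [IsScalarTower.algebraMap_eq P2 K2 L, ← Polynomial.map_map, Polynomial.separable_map] at hM1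
    exact hM1
  refine h1.of_dvd (minpoly.dvd _ _ ?_)
  rw [Polynomial.aeval_map_algebraMap]
  rw [Polynomial.aeval_def, Polynomial.eval₂_map] at hM2
  exact hM2

theorem aux_ic (k : Type*) [Field k] (n : ℕ) : IsIntegrallyClosed (MvPolynomial (Fin n) k) := by
  let := (UniqueFactorizationMonoid.toGCDMonoid (MvPolynomial (Fin n) k))
  exact GCDMonoid.toIsIntegrallyClosed

theorem aux_psi (k k2 : Type*) [Field k] [Field k2] [Algebra k2 k] (n : ℕ) (jk : k →+* k2)
    (hjkfin : jk.Finite) (p e : ℕ) [ExpChar k p] (hjk : ∀ x, algebraMap k2 k (jk x) = x ^ (p ^ e)) :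
    ∃ ψ : MvPolynomial (Fin n) k →+* MvPolynomial (Fin n) k2, ψ.Finite ∧
      ∀ x, MvPolynomial.map (algebraMap k2 k) (ψ x) = x ^ (p ^ e) := by
  have : ExpChar (MvPolynomial (Fin n) k) p :=
    expChar_of_injective_algebraMap (R := k) (MvPolynomial.C_injective _ _) p
  let ψ : MvPolynomial (Fin n) k →+* MvPolynomial (Fin n) k2 :=
    MvPolynomial.eval₂Hom (MvPolynomial.C.comp jk) (fun i => MvPolynomial.X i ^ (p ^ e))
  have hψ (x) : MvPolynomial.map (algebraMap k2 k) (ψ x) = x ^ (p ^ e) := by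
    change ((MvPolynomial.map (algebraMap k2 k)).comp ψ) x = iterateFrobenius _ p e x
    congr 1
    apply MvPolynomial.ringHom_ext
    · intro r
      simp [ψ, iterateFrobenius_def, hjk]
    · intro i
      simp [ψ, iterateFrobenius_def]
  have hψ2 (x) : ψ (MvPolynomial.map (algebraMap k2 k) x) = x ^ (p ^ e) := by
    apply MvPolynomial.map_injective _ (algebraMap k2 k).injective
    rw [hψ, map_pow]
  refine ⟨ψ, ?_, hψ⟩
  apply RingHom.IsIntegral.to_finite
  · intro x
    refine ⟨Polynomial.X ^ (p ^ e) - Polynomial.C (MvPolynomial.map (algebraMap k2 k) x),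
      Polynomial.monic_X_pow_sub_C _ (expChar_pow_pos k p e).ne', ?_⟩
    simp [hψ2]
  · have h1 : (ψ.comp MvPolynomial.C).FiniteType := by
      have : ψ.comp MvPolynomial.C = (MvPolynomial.C).comp jk := by
        ext x; simp [ψ]
      rw [this]
      refine RingHom.FiniteType.comp ?_ hjkfin.finiteType
      exact RingHom.finiteType_algebraMap.mpr
        (inferInstanceAs (Algebra.FiniteType k2 (MvPolynomial (Fin n) k2)))
    exact RingHom.FiniteType.of_comp_finiteType h1

/-- integral closure of a polynomial ring in a finite extension of its fraction field is noetherian -/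
theorem aux_N2 (k : Type*) [Field k] (n : ℕ) (K L : Type*) [Field K] [Field L]
    [Algebra (MvPolynomial (Fin n) k) K] [IsFractionRing (MvPolynomial (Fin n) k) K]
    [Algebra (MvPolynomial (Fin n) k) L]
    [Algebra K L] [IsScalarTower (MvPolynomial (Fin n) k) K L]
    [FiniteDimensional K L] : IsNoetherian (MvPolynomial (Fin n) k)
      (integralClosure (MvPolynomial (Fin n) k) L) := by
  classical
  obtain ⟨p, hp⟩ := ExpChar.exists k
  let P := MvPolynomial (Fin n) k
  have hPL : Function.Injective (algebraMap P L) := by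
    rw [IsScalarTower.algebraMap_eq P K L]
    exact (algebraMap K L).injective.comp (IsFractionRing.injective P K)
  have : ExpChar P p := expChar_of_injective_algebraMap (R := k) (MvPolynomial.C_injective _ _) p
  have : ExpChar K p := expChar_of_injective_algebraMap (R := P) (IsFractionRing.injective P K) p
  have : ExpChar L p := expChar_of_injective_algebraMap (R := P) hPL p
  obtain ⟨e, he⟩ := (IsPurelyInseparable.hasExponent_iff' (separableClosure K L) L p).mp inferInstance
  have hsep (a : L) : IsSeparable K (a ^ p ^ e) := by
    obtain ⟨x, hx⟩ := he a
    rw [← hx]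
    exact mem_separableClosure_iff.mp x.2
  set q := p ^ e with hq
  obtain ⟨s, hs⟩ : (⊤ : IntermediateField K L).FG := IntermediateField.fg_top_iff.mpr inferInstance
  -- denominators-free polynomials
  have hM (a : L) : ∃ M : Polynomial P, (M.map (algebraMap P L)).Separable ∧
      Polynomial.aeval (a ^ q) M = 0 := by
    obtain ⟨b, hb, h⟩ := IsLocalization.integerNormalization_spec (nonZeroDivisors P)
      (minpoly K (a ^ q))
    set M := IsLocalization.integerNormalization (nonZeroDivisors P) (minpoly K (a ^ q))
    have hb0 : algebraMap P K b ≠ 0 := by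
      simpa using nonZeroDivisors.ne_zero hb
    rw [← algebraMap_smul K b, ← Polynomial.C_mul'] at h
    refine ⟨M, ?_, ?_⟩
    · rw [IsScalarTower.algebraMap_eq P K L, ← Polynomial.map_map, Polynomial.separable_map, h]
      exact Polynomial.Separable.unit_mul (hb0.isUnit.map Polynomial.C) (hsep a)
    · rw [← Polynomial.aeval_map_algebraMap K, h, map_mul, minpoly.aeval, mul_zero]
  choose M hM1 hM2 using hM
  -- coefficients
  let F : Set k := ⋃ a ∈ s, ⋃ j ∈ (M a).support, ⋃ m ∈ ((M a).coeff j).support, {((M a).coeff j).coeff m}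
  have hF : F.Finite := by
    refine s.finite_toSet.biUnion fun a _ => ?_
    refine (M a).support.finite_toSet.biUnion fun j _ => ?_
    exact ((M a).coeff j).support.finite_toSet.biUnion fun m _ => Set.finite_singleton _
  let kq : Subfield k := (iterateFrobenius k p e).fieldRange
  let k2 : IntermediateField kq k := IntermediateField.adjoin kq F
  have : FiniteDimensional kq k2 := by
    have := hF.to_subtype
    refine IntermediateField.finiteDimensional_adjoin fun x _ => ?_
    refine IsIntegral.of_pow (n := q) (expChar_pow_pos k p e) ?_
    exact isIntegral_algebraMap (R := kq) (x := ⟨x ^ q, x, rfl⟩)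
  let P2 := MvPolynomial (Fin n) k2
  let ι : P2 →+* P := MvPolynomial.map (algebraMap k2 k)
  have hι : Function.Injective ι := MvPolynomial.map_injective _ (algebraMap k2 k).injective
  let jk : k →+* k2 := (algebraMap kq k2).comp (iterateFrobenius k p e).rangeRestrictField
  have hjk (x : k) : (jk x : k) = x ^ q := rfl
  have hjkfin : jk.Finite := by
    refine RingHom.Finite.comp (RingHom.finite_algebraMap.mpr inferInstance) ?_
    refine RingHom.Finite.of_surjective _ ?_
    rintro ⟨_, x, rfl⟩
    exact ⟨x, rfl⟩
  obtain ⟨ψ, hψfin, hψ⟩ : ∃ ψ : P →+* P2, ψ.Finite ∧ ∀ x, ι (ψ x) = x ^ q :=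
    aux_psi k k2 n jk hjkfin p e hjk
  have : IsIntegrallyClosed P2 := aux_ic k2 n
  have : IsNoetherianRing P2 := inferInstanceAs (IsNoetherianRing (MvPolynomial (Fin n) k2))
  have : IsNoetherianRing P := inferInstanceAs (IsNoetherianRing (MvPolynomial (Fin n) k))
  refine aux_D P P2 K L p e ι hι hPL ψ hψfin hψ s s.finite_toSet hs ?_
  intro a ha
  obtain ⟨M2, hM2'⟩ : ∃ M2 : Polynomial P2, M2.map ι = M a := by
    have : M a ∈ Polynomial.lifts ι := by
      rw [Polynomial.lifts_iff_coeff_lifts]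
      intro j
      refine MvPolynomial.mem_range_map_iff_coeffs_subset.mpr ?_
      intro c hc
      obtain ⟨m, hm, rfl⟩ := MvPolynomial.mem_coeffs_iff.mp hc
      have hj : (M a).coeff j ≠ 0 := by
        intro h0
        rw [h0] at hm
        simp at hm
      refine ⟨⟨_, IntermediateField.subset_adjoin kq F (?_ : ((M a).coeff j).coeff m ∈ F)⟩, rfl⟩
      simp only [F, Set.mem_iUnion, Set.mem_singleton_iff]
      exact ⟨a, ha, j, Polynomial.mem_support_iff.mpr hj, m, hm, rfl⟩
    exact (Polynomial.mem_lifts _).mp this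
  refine ⟨M2, ?_, ?_⟩
  · rw [hM2']; exact hM1 a
  · rw [hM2']; exact hM2 a

theorem aux_L.{u, v, w} {P : Type u} {K : Type v} {B : Type w} [CommRing P] [IsDomain P] [Field K] [Algebra P K] [IsFractionRing P K]
    [CommRing B] [Algebra P B] [Algebra.FiniteType P B]
    (hinj : Function.Injective (algebraMap P B)) :
    ∃ (L : Type (max v w)) (_ : Field L) (_ : Algebra K L) (β : B →+* L), FiniteDimensional K L ∧
      ∀ x : P, β (algebraMap P B x) = algebraMap K L (algebraMap P K x) := by
  have : Module.Flat P K := IsLocalization.flat K (nonZeroDivisors P)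
  have h1 : Function.Injective (algebraMap K (TensorProduct P K B)) :=
    Algebra.TensorProduct.includeLeft_injective (S := K) hinj
  have : Nontrivial (TensorProduct P K B) := h1.nontrivial
  obtain ⟨m, hm⟩ := Ideal.exists_maximal (TensorProduct P K B)
  let := Ideal.Quotient.field m
  have : Algebra.FiniteType K (TensorProduct P K B ⧸ m) := inferInstance
  refine ⟨TensorProduct P K B ⧸ m, inferInstance, inferInstance,
    (Ideal.Quotient.mk m).comp (Algebra.TensorProduct.includeRight : B →ₐ[P] TensorProduct P K B).toRingHom,
    finite_of_finite_type_of_isJacobsonRing K _, fun x => ?_⟩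
  change Ideal.Quotient.mk m ((Algebra.TensorProduct.includeRight : B →ₐ[P] TensorProduct P K B) (algebraMap P B x)) = Ideal.Quotient.mk m (algebraMap K _ (algebraMap P K x))
  rw [AlgHom.commutes, ← IsScalarTower.algebraMap_apply]

theorem aux_alg {k : Type*} [Field k] (R : ℕ → Type*) [∀ i, CommRing (R i)] [∀ i, IsDomain (R i)]
    (r : ∀ i, R i →+* R (i + 1)) (hfin : ∀ i, (r i).Finite) (hinj : ∀ i, Function.Injective (r i))
    (j : k →+* R 0) (hj : j.FiniteType) {B : Type*} [CommRing B] (h : ∀ i, R i →+* B)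
    (hcomp : ∀ i, (h (i + 1)).comp (r i) = h i) (hB : (h 0).FiniteType)
    (h0 : Function.Injective (h 0)) :
    ∃ n, ∀ i ≥ n, Function.Bijective (r i) := by
  algebraize [j]
  obtain ⟨s, g, hg, hgf⟩ := exists_finite_inj_algHom_of_fg k (R 0)
  let P := MvPolynomial (Fin s) k
  let ρ : ∀ i, P →+* R i := fun i => Nat.rec (g : P →+* R 0) (fun i x => (r i).comp x) i
  have hρ0 : ρ 0 = g := rfl
  have hρs (i) : ρ (i+1) = (r i).comp (ρ i) := rfl
  have hρf (i) : (ρ i).Finite := by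
    induction i with
    | zero => exact hgf
    | succ i ih => exact (hfin i).comp ih
  have hρh (i) : (h i).comp (ρ i) = (h 0).comp (ρ 0) := by
    induction i with
    | zero => rfl
    | succ i ih => rw [hρs, ← RingHom.comp_assoc, hcomp, ih]
  let : Algebra P B := ((h 0).comp (ρ 0)).toAlgebra
  have : Algebra.FiniteType P B := hB.comp (hρf 0).finiteType
  have hPB : Function.Injective (algebraMap P B) := h0.comp hg
  let K := FractionRing P
  obtain ⟨L, _, _, β, hfd, hβ⟩ := aux_L (K := K) hPB
  let : Algebra P L := ((algebraMap K L).comp (algebraMap P K)).toAlgebra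
  have : IsScalarTower P K L := IsScalarTower.of_algebraMap_eq' rfl
  have hN : IsNoetherian P (integralClosure P L) := aux_N2 k s K L
  let γ (i) : R i →+* L := β.comp (h i)
  have hγρ (i) (x : P) : γ i (ρ i x) = algebraMap P L x := by
    have := congrArg (fun z => β (z x)) (hρh i)
    exact this.trans (hβ x)
  have hPL : Function.Injective (algebraMap P L) :=
    (algebraMap K L).injective.comp (IsFractionRing.injective P K)
  have hγr (i) (x : R i) : γ (i+1) (r i x) = γ i x := congrArg (fun z => β (z x)) (hcomp i)
  have hγ (i) : Function.Injective (γ i) := by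
    let := (ρ i).toAlgebra
    have : Algebra.IsIntegral P (R i) := ⟨(hρf i).to_isIntegral⟩
    rw [RingHom.injective_iff_ker_eq_bot]
    apply Ideal.eq_bot_of_comap_eq_bot (R := P)
    rw [eq_bot_iff]
    intro x hx
    have hx : γ i (ρ i x) = 0 := hx
    rw [hγρ] at hx
    exact (map_eq_zero_iff _ hPL).mp hx
  have hγint (i) (x : R i) : IsIntegral P (γ i x) := by
    obtain ⟨f, hf, hx⟩ := (hρf i).to_isIntegral x
    refine ⟨f, hf, ?_⟩
    have := congrArg (γ i) hx
    rw [Polynomial.hom_eval₂, map_zero] at this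
    rw [← this]
    congr 1
    exact RingHom.ext fun y => (hγρ i y).symm
  let N (i) : Submodule P (integralClosure P L) :=
    { carrier := {x | ∃ y, γ i y = x}
      add_mem' := by
        rintro a b ⟨y, hy⟩ ⟨z, hz⟩
        exact ⟨y + z, by rw [map_add, hy, hz]; rfl⟩
      zero_mem' := ⟨0, by rw [map_zero]; rfl⟩
      smul_mem' := by
        rintro c x ⟨y, hy⟩
        refine ⟨ρ i c * y, ?_⟩
        rw [map_mul, hγρ, hy]
        exact (Algebra.smul_def c (x : L)).symm }
  have hmono : Monotone N := by
    refine monotone_nat_of_le_succ fun i => ?_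
    rintro x ⟨y, hy⟩
    exact ⟨r i y, (hγr i y).trans hy⟩
  obtain ⟨n, hn⟩ := monotone_stabilizes_iff_noetherian.mpr hN ⟨N, hmono⟩
  refine ⟨n, fun i hi => ⟨hinj i, fun x => ?_⟩⟩
  have hNi : N (i+1) = N i := (hn (i+1) (by omega)).symm.trans (hn i hi)
  have hx : (⟨γ (i+1) x, hγint _ x⟩ : integralClosure P L) ∈ N (i+1) := ⟨x, rfl⟩
  rw [hNi] at hx
  obtain ⟨y, hy⟩ := hx
  exact ⟨y, hγ (i+1) ((hγr i y).trans hy)⟩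

open Limits in
theorem aux_finite {S : Scheme} [IsLocallyNoetherian S] [CompactSpace S]
    (X : ℕ → Scheme) (sX : ∀ i, X i ⟶ S)
    (hXsep : ∀ i, AlgebraicGeometry.IsSeparated (sX i))
    (f : ∀ i, X (i + 1) ⟶ X i)
    (hfproper : ∀ i, IsProper (f i))
    (Y : Scheme) (sY : Y ⟶ S)
    (hYlft : LocallyOfFiniteType sY) (hYqc : QuasiCompact sY)
    (g : ∀ i, Y ⟶ X i)
    (hg : ∀ i, g i ≫ sX i = sY)
    (hgsurj : ∀ i, AlgebraicGeometry.Surjective (g i))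
    (hcomm : ∀ i, g (i + 1) ≫ f i = g i) :
    ∃ i₀ : ℕ, ∀ i ≥ i₀, IsFinite (f i) := by
  have hW : IsLocallyNoetherian (pullback sY sY) :=
    LocallyOfFiniteType.isLocallyNoetherian (pullback.fst sY sY ≫ sY)
  have hC : CompactSpace (pullback sY sY : Scheme) :=
    QuasiCompact.compactSpace_of_compactSpace (pullback.fst sY sY ≫ sY)
  have hN : IsNoetherian (pullback sY sY) := {}
  have : TopologicalSpace.NoetherianSpace (pullback sY sY : Scheme) := inferInstance
  have hex (i : ℕ) : ∃ c : pullback (g i) (g i) ⟶ pullback sY sY,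
      c ≫ pullback.fst _ _ = pullback.fst _ _ ∧ c ≫ pullback.snd _ _ = pullback.snd _ _ :=
    ⟨pullback.lift (pullback.fst _ _) (pullback.snd _ _)
      (by rw [← hg i, pullback.condition_assoc]), pullback.lift_fst _ _ _, pullback.lift_snd _ _ _⟩
  choose c hc1 hc2 using hex
  have hc (i : ℕ) : IsClosedImmersion (c i) := by
    have h := hg i
    subst h
    have : c i = pullback.mapDesc (g i) (g i) (sX i) := by
      apply pullback.hom_ext
      · rw [hc1]; unfold pullback.mapDesc pullback.map; exact ((pullback.lift_fst _ _ _).trans (Category.comp_id _)).symm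
      · rw [hc2]; unfold pullback.mapDesc pullback.map; exact ((pullback.lift_snd _ _ _).trans (Category.comp_id _)).symm
    rw [this]; infer_instance
  have hex (i : ℕ) : ∃ d : pullback (g (i+1)) (g (i+1)) ⟶ pullback (g i) (g i),
      d ≫ pullback.fst _ _ = pullback.fst _ _ ∧ d ≫ pullback.snd _ _ = pullback.snd _ _ :=
    ⟨pullback.lift (pullback.fst _ _) (pullback.snd _ _)
      (by rw [← hcomm i, pullback.condition_assoc]), pullback.lift_fst _ _ _, pullback.lift_snd _ _ _⟩
  choose d hd1 hd2 using hex
  have hdc (i : ℕ) : d i ≫ c i = c (i+1) := by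
    apply pullback.hom_ext <;> simp [hc1, hd1, hc2, hd2]
  let Z (i : ℕ) : TopologicalSpace.Closeds (pullback sY sY : Scheme) :=
    ⟨Set.range (c i), (c i).isClosedEmbedding.isClosed_range⟩
  have hZ : Antitone Z := by
    refine antitone_nat_of_succ_le fun i => ?_
    rintro _ ⟨x, rfl⟩
    refine ⟨d i x, ?_⟩
    rw [← hdc i]; simp
  obtain ⟨n, hn⟩ := WellFoundedLT.antitone_chain_condition hZ
  refine ⟨n, fun i hi => ?_⟩
  have hZi : Z i = Z (i+1) := (hn i hi).symm.trans (hn (i+1) (by omega))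
  -- surjection onto the fibre square
  obtain ⟨e, he1, he2, hes⟩ : ∃ e : pullback (g i) (g i) ⟶ pullback (f i) (f i),
      e ≫ pullback.fst _ _ = pullback.fst _ _ ≫ g (i+1) ∧
      e ≫ pullback.snd _ _ = pullback.snd _ _ ≫ g (i+1) ∧ Surjective e := by
    refine ⟨pullback.map (g i) (g i) (f i) (f i) (g (i+1)) (g (i+1)) (𝟙 _)
      (by simp [hcomm]) (by simp [hcomm]), pullback.lift_fst _ _ _, pullback.lift_snd _ _ _, ?_⟩
    exact ⟨by
      rw [← Set.range_eq_univ, Scheme.Pullback.range_map]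
      rw [Set.range_eq_univ.mpr (hgsurj (i+1)).1]; simp⟩
  have hdiag : Surjective (pullback.diagonal (f i)) := by
    refine ⟨fun z => ?_⟩
    obtain ⟨w, rfl⟩ := hes.1 z
    have hw : c i w ∈ Z (i+1) := by rw [← hZi]; exact ⟨w, rfl⟩
    obtain ⟨w', hw'⟩ := hw
    have hw2 : d i w' = w := by
      apply (c i).isClosedEmbedding.injective
      rw [← hw', ← hdc]; simp
    refine ⟨(pullback.fst _ _ ≫ g (i+1)) w', ?_⟩
    suffices h : (pullback.fst (g (i + 1)) (g (i + 1)) ≫ g (i + 1)) ≫ pullback.diagonal (f i)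
        = d i ≫ e by
      rw [← hw2, ← Scheme.Hom.comp_apply, ← Scheme.Hom.comp_apply, h]
    apply pullback.hom_ext
    · rw [Category.assoc, pullback.diagonal_fst, Category.assoc (d i), he1, ← Category.assoc (d i), hd1]
      simp
    · rw [Category.assoc, pullback.diagonal_snd, Category.assoc (d i), he2, ← Category.assoc (d i), hd2]
      simp [pullback.condition]
  have := (UniversallyInjective.iff_diagonal (f i)).mpr hdiag
  exact IsFinite.of_isProper_of_locallyQuasiFinite _

theorem aux_iso.{u, v} {X Y : Scheme.{u}} (f : X ⟶ Y) [IsAffineHom f] {ι : Type v} (U : ι → Y.Opens)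
    (hU : ∀ i, IsAffineOpen (U i)) (hcov : ∀ x : Y, ∃ i, x ∈ U i)
    (h : ∀ i, Function.Bijective (f.app (U i)).hom) : IsIso f := by
  change MorphismProperty.isomorphisms Scheme.{u} f
  refine IsZariskiLocalAtTarget.of_iSup_eq_top (P := MorphismProperty.isomorphisms Scheme.{u})
    U ?_ fun i => ?_
  · rw [eq_top_iff]
    intro x _
    obtain ⟨i, hi⟩ := hcov x
    exact TopologicalSpace.Opens.mem_iSup.mpr ⟨i, hi⟩
  · have : IsAffine (U i) := hU i
    have : IsAffine (f ⁻¹ᵁ U i) := (hU i).preimage f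
    refine (MorphismProperty.arrow_mk_iso_iff (MorphismProperty.isomorphisms Scheme.{u})
      (arrowIsoSpecΓOfIsAffine (f ∣_ U i))).mpr ?_
    suffices IsIso (f ∣_ U i).appTop from inferInstanceAs (IsIso (Spec.map ((f ∣_ U i).appTop)))
    have : IsIso (f.app (U i)) := (ConcreteCategory.isIso_iff_bijective _).mpr (h i)
    rw [Scheme.Hom.appTop, morphismRestrict_app]
    have : IsIso (f.app ((U i).ι ''ᵁ ⊤)) := by
      convert this <;> simp
    refine IsIso.comp_isIso' this ?_
    have h3 {A B : X.Opens} (e : A = B) : IsIso (X.presheaf.map (eqToHom e).op) := inferInstance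
    exact h3 _

theorem aux_loc (k : Type*) [Field k]
    (X : ℕ → Scheme) (sX : X 0 ⟶ Spec (CommRingCat.of k))
    (hXint : ∀ i, IsIntegral (X i))
    (hXsep : AlgebraicGeometry.IsSeparated sX)
    (hXlft : LocallyOfFiniteType sX)
    (f : ∀ i, X (i + 1) ⟶ X i)
    (hffin : ∀ i, IsFinite (f i))
    (hfsurj : ∀ i, AlgebraicGeometry.Surjective (f i))
    (Y : Scheme) (sY : Y ⟶ Spec (CommRingCat.of k))
    (hYint : IsIntegral Y)
    (hYlft : LocallyOfFiniteType sY) (hYqc : QuasiCompact sY)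
    (g : ∀ i, Y ⟶ X i)
    (hg : g 0 ≫ sX = sY)
    (hgsurj : ∀ i, AlgebraicGeometry.Surjective (g i))
    (hcomm : ∀ i, g (i + 1) ≫ f i = g i)
    (W : ∀ i, (X i).Opens) (hWaff : ∀ i, IsAffineOpen (W i))
    (hW : ∀ i, W (i + 1) = f i ⁻¹ᵁ W i) (hne : (W 0 : Set (X 0)).Nonempty) :
    ∃ n : ℕ, ∀ i ≥ n, Function.Bijective ((f i).app (W i)).hom := by
  have hgW (i) : g i ⁻¹ᵁ W i = g 0 ⁻¹ᵁ W 0 := by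
    induction i with
    | zero => rfl
    | succ i ih => rw [hW, ← ih, ← hcomm i]; rfl
  obtain ⟨x, hx⟩ := hne
  obtain ⟨y, rfl⟩ := (hgsurj 0).surj x
  obtain ⟨V, hV, hyV, hVW⟩ := exists_isAffineOpen_mem_and_subset (X := Y) (x := y) (U := g 0 ⁻¹ᵁ W 0) hx
  have hVW' (i) : V ≤ g i ⁻¹ᵁ W i := by rw [hgW]; exact hVW
  have hne (i) : Nonempty (W i) := ⟨⟨g i y, hVW' i hyV⟩⟩
  have hdom (i : ℕ) : IsDomain Γ(X i, W i) := inferInstance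
  have hqc : QuasiCompact (g 0) := by
    have : QuasiCompact (g 0 ≫ sX) := hg ▸ hYqc
    exact QuasiCompact.of_comp (g 0) sX
  have hlft : LocallyOfFiniteType (g 0) := by
    have : LocallyOfFiniteType (g 0 ≫ sX) := hg ▸ hYlft
    exact locallyOfFiniteType_of_comp (g 0) sX
  have hinjf (i) : Function.Injective ((f i).app (W i)).hom := by
    have := IsSchemeTheoreticallyDominant.of_isDominant (f i)
    exact (f i).app_injective (W i)
  have heq (i) : (f i).appLE (W i) (W (i+1)) (hW i).le =
      (f i).app (W i) ≫ (X (i+1)).presheaf.map (eqToHom (hW i)).op := rfl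
  have hbij (i) : Function.Bijective ((X (i+1)).presheaf.map (eqToHom (hW i)).op).hom :=
    (ConcreteCategory.isIso_iff_bijective _).mp inferInstance
  have hk : ((Scheme.ΓSpecIso (CommRingCat.of k)).inv ≫ sX.appLE ⊤ (W 0) le_top).hom.FiniteType := by
    rw [CommRingCat.hom_comp]
    refine (sX.finiteType_appLE (isAffineOpen_top _) (hWaff 0) _).comp ?_
    exact RingHom.FiniteType.of_surjective _
      ((ConcreteCategory.isIso_iff_bijective (Scheme.ΓSpecIso (CommRingCat.of k)).inv).mp inferInstance).2
  have h1 (i : ℕ) : ((f i).appLE (W i) (W (i+1)) (hW i).le).hom.Finite := by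
    rw [heq, CommRingCat.hom_comp]
    exact (RingHom.Finite.of_surjective _ (hbij i).2).comp ((f i).finite_app _ (hWaff i))
  have h2 (i : ℕ) : Function.Injective ((f i).appLE (W i) (W (i+1)) (hW i).le).hom := by
    rw [heq, CommRingCat.hom_comp, RingHom.coe_comp]
    exact (hbij i).1.comp (hinjf i)
  have h3 (i : ℕ) : ((g (i+1)).appLE (W (i+1)) V (hVW' (i+1))).hom.comp
      ((f i).appLE (W i) (W (i+1)) (hW i).le).hom = ((g i).appLE (W i) V (hVW' i)).hom := by
    rw [← CommRingCat.hom_comp, Scheme.Hom.appLE_comp_appLE]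
    simp only [hcomm]
  have h4 : Function.Injective ((g 0).appLE (W 0) V (hVW' 0)).hom := by
    have := IsSchemeTheoreticallyDominant.of_isDominant (g 0)
    rw [Scheme.Hom.appLE, CommRingCat.hom_comp, RingHom.coe_comp]
    have : Nonempty V := ⟨⟨y, hyV⟩⟩
    exact (map_injective_of_isIntegral Y _).comp ((g 0).app_injective (W 0))
  obtain ⟨n, hn⟩ := aux_alg (k := k) (fun i => Γ(X i, W i))
    (fun i => ((f i).appLE (W i) (W (i+1)) (hW i).le).hom) h1 h2
    ((Scheme.ΓSpecIso (CommRingCat.of k)).inv ≫ sX.appLE ⊤ (W 0) le_top).hom hk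
    (fun i => ((g i).appLE (W i) V (hVW' i)).hom) h3
    ((g 0).finiteType_appLE (hWaff 0) hV _) h4
  refine ⟨n, fun i hi => ?_⟩
  have := hn i hi
  rw [heq, CommRingCat.hom_comp, RingHom.coe_comp] at this
  exact (Function.Bijective.of_comp_iff' (hbij i) _).mp this

theorem aux_fin_iso (k : Type*) [Field k]
    (X : ℕ → Scheme) (sX : X 0 ⟶ Spec (CommRingCat.of k))
    (hXint : ∀ i, IsIntegral (X i))
    (hXsep : AlgebraicGeometry.IsSeparated sX)
    (hXlft : LocallyOfFiniteType sX) (hXqc : QuasiCompact sX)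
    (f : ∀ i, X (i + 1) ⟶ X i)
    (hffin : ∀ i, IsFinite (f i))
    (hfsurj : ∀ i, AlgebraicGeometry.Surjective (f i))
    (Y : Scheme) (sY : Y ⟶ Spec (CommRingCat.of k))
    (hYint : IsIntegral Y)
    (hYlft : LocallyOfFiniteType sY) (hYqc : QuasiCompact sY)
    (g : ∀ i, Y ⟶ X i)
    (hg : g 0 ≫ sX = sY)
    (hgsurj : ∀ i, AlgebraicGeometry.Surjective (g i))
    (hcomm : ∀ i, g (i + 1) ≫ f i = g i) :
    ∃ n : ℕ, ∀ i ≥ n, IsIso (f i) := by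
  have : CompactSpace (X 0) := QuasiCompact.compactSpace_of_compactSpace sX
  let W (U : (X 0).Opens) (i : ℕ) : (X i).Opens := Nat.rec U (fun i V => f i ⁻¹ᵁ V) i
  have hW (U) (i) : W U (i+1) = f i ⁻¹ᵁ W U i := rfl
  have hWaff (U) (hU : IsAffineOpen U) (i) : IsAffineOpen (W U i) := by
    induction i with
    | zero => exact hU
    | succ i ih => rw [hW]; exact ih.preimage (f i)
  choose U hU hxU _ using fun x : X 0 =>
    exists_isAffineOpen_mem_and_subset (TopologicalSpace.Opens.mem_top x)
  obtain ⟨t, ht⟩ := isCompact_univ.elim_finite_subcover (fun x => (U x : Set (X 0)))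
    (fun x => (U x).isOpen) (fun x _ => Set.mem_iUnion.mpr ⟨x, hxU x⟩)
  have hcov (i) : ∀ z : X i, ∃ x : t, z ∈ W (U x) i := by
    induction i with
    | zero =>
      intro z
      obtain ⟨x, hx, hz⟩ := Set.mem_iUnion₂.mp (ht (Set.mem_univ z))
      exact ⟨⟨x, hx⟩, hz⟩
    | succ i ih => intro z; exact ih (f i z)
  choose n hn using fun x => aux_loc k X sX hXint hXsep hXlft f hffin hfsurj Y sY hYint hYlft hYqc g hg
    hgsurj hcomm (W (U x)) (hWaff _ (hU x)) (hW _) ⟨x, hxU x⟩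
  refine ⟨t.sup n, fun i hi => ?_⟩
  exact aux_iso (f i) (fun x : t => W (U x) i) (fun x => hWaff _ (hU x) i) (hcov i)
    (fun x => hn x i ((Finset.le_sup x.2).trans hi))

/-- Let `X₀ ← X₁ ← X₂ ← ⋯` be a sequence of proper surjective morphisms of varieties over a
field `k` (integral, separated, finite-type `k`-schemes), and suppose a variety `Y` over `k`
surjects compatibly onto every `Xᵢ`. Then `fᵢ : Xᵢ₊₁ → Xᵢ` is an isomorphism for all large
`i`. -/
theorem eventually_iso_of_dominated (k : Type*) [Field k]
    (X : ℕ → Scheme) (sX : ∀ i, X i ⟶ Spec (CommRingCat.of k))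
    (hXint : ∀ i, IsIntegral (X i))
    (hXsep : ∀ i, AlgebraicGeometry.IsSeparated (sX i))
    (hXlft : ∀ i, LocallyOfFiniteType (sX i)) (hXqc : ∀ i, QuasiCompact (sX i))
    (f : ∀ i, X (i + 1) ⟶ X i)
    (hf : ∀ i, f i ≫ sX i = sX (i + 1))
    (hfproper : ∀ i, IsProper (f i))
    (hfsurj : ∀ i, AlgebraicGeometry.Surjective (f i))
    (Y : Scheme) (sY : Y ⟶ Spec (CommRingCat.of k))
    (hYint : IsIntegral Y) (hYsep : AlgebraicGeometry.IsSeparated sY)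
    (hYlft : LocallyOfFiniteType sY) (hYqc : QuasiCompact sY)
    (g : ∀ i, Y ⟶ X i)
    (hg : ∀ i, g i ≫ sX i = sY)
    (hgsurj : ∀ i, AlgebraicGeometry.Surjective (g i))
    (hcomm : ∀ i, g (i + 1) ≫ f i = g i) :
    ∃ i₀ : ℕ, ∀ i ≥ i₀, IsIso (f i) := by
  obtain ⟨N, hN⟩ := aux_finite X sX hXsep f hfproper Y sY hYlft hYqc g hg hgsurj hcomm
  obtain ⟨n, hn⟩ := aux_fin_iso k (fun i => X (N + i)) (sX N) (fun i => hXint _) (hXsep N)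
    (hXlft N) (hXqc N) (fun i => f (N + i)) (fun i => hN _ (Nat.le_add_right _ _))
    (fun i => hfsurj _) Y sY hYint hYlft hYqc (fun i => g (N + i)) (hg N) (fun i => hgsurj _)
    (fun i => hcomm _)
  refine ⟨N + n, fun i hi => ?_⟩
  obtain ⟨m, rfl⟩ := Nat.exists_eq_add_of_le (show N ≤ i by omega)
  exact hn m (by omega)
end

section
/- Let A be a commutative ring, B a commutative integral domain which is an A-algebra, and M, N two A-modules. If the torsion-free quotient ((M ⊕ N) ⊗_A B)/T((M ⊕ N) ⊗_A B) is a flat B-module, then the torsion-free quotient (M ⊗_A B)/T(M ⊗_A B) is also a flat B-module. -/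
open TensorProduct

theorem torsion_le_comap_aux {B P Q : Type*} [CommRing B] [AddCommGroup P] [Module B P]
    [AddCommGroup Q] [Module B Q] (f : P →ₗ[B] Q) :
    Submodule.torsion B P ≤ (Submodule.torsion B Q).comap f := by
  intro x hx
  rw [Submodule.mem_torsion_iff] at hx
  obtain ⟨a, ha⟩ := hx
  rw [Submodule.mem_comap, Submodule.mem_torsion_iff]
  refine ⟨a, ?_⟩
  have h := congrArg f ha
  rw [Submonoid.smul_def, map_smul, map_zero] at h
  exact h

/-- For a commutative ring `A`, an integral domain `B` which is an `A`-algebra, and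
`A`-modules `M`, `N`: if the torsion-free base change of `M ⊕ N` to `B` is flat over `B`,
then so is the torsion-free base change of `M`. -/
theorem flat_torsionFree_pullback_of_summand (A B : Type*) [CommRing A] [CommRing B]
    [IsDomain B] [Algebra A B] (M N : Type*) [AddCommGroup M] [Module A M] [AddCommGroup N]
    [Module A N]
    (hflat : Module.Flat B ((B ⊗[A] (M × N)) ⧸ Submodule.torsion B (B ⊗[A] (M × N)))) :
    Module.Flat B ((B ⊗[A] M) ⧸ Submodule.torsion B (B ⊗[A] M)) := by
  refine Module.Flat.of_retract
    (Submodule.mapQ _ _ ((LinearMap.inl A M N).baseChange B) (torsion_le_comap_aux _))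
    (Submodule.mapQ _ _ ((LinearMap.fst A M N).baseChange B) (torsion_le_comap_aux _)) ?_
  have h : (LinearMap.fst A M N).baseChange B ∘ₗ (LinearMap.inl A M N).baseChange B
      = LinearMap.id := by
    rw [← LinearMap.baseChange_comp, LinearMap.fst_comp_inl, LinearMap.baseChange_id]
  refine LinearMap.ext fun x => ?_
  obtain ⟨x, rfl⟩ := Submodule.Quotient.mk_surjective _ x
  have hx := LinearMap.congr_fun h x
  simp only [LinearMap.comp_apply, LinearMap.id_apply] at hx
  simp only [LinearMap.comp_apply, LinearMap.id_apply]
  rw [Submodule.mapQ_apply, Submodule.mapQ_apply, hx]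
end

section
/- Let k be a commutative ring, p a prime, n ≥ 2, and let g be a polynomial in the multivariate polynomial ring k[x₀, …, x_n] which involves only the variables x₀, …, x_{n−2} (i.e., g lies in the image of k[x₀, …, x_{n−2}]). Set f = g + x_{n−1}·x_n. Then the coefficient of the monomial x_{n−1}^{p−1} · x_n^{p−1} in f^{p−1} is equal to 1. -/
/-- Let `k` be a commutative ring, `p` a prime, `n ≥ 2`, and `g ∈ k[x₀,…,xₙ]` a polynomial
involving only the variables `x₀, …, x_{n-2}`. Then the coefficient of the monomial
`x_{n-1}^(p-1) * xₙ^(p-1)` in `(g + x_{n-1} * xₙ)^(p-1)` equals `1`. -/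
theorem coeff_pow_hypersurface (k : Type*) [CommRing k] (p n : ℕ) (hp : p.Prime) (hn : 2 ≤ n)
    (g : MvPolynomial (Fin (n + 1)) k) (hg : ∀ i ∈ g.vars, (i : ℕ) + 2 ≤ n) :
    MvPolynomial.coeff
      (Finsupp.single (⟨n - 1, by omega⟩ : Fin (n + 1)) (p - 1) +
        Finsupp.single (⟨n, by omega⟩ : Fin (n + 1)) (p - 1))
      ((g + MvPolynomial.X ⟨n - 1, by omega⟩ * MvPolynomial.X ⟨n, by omega⟩) ^ (p - 1)) = 1 := by
  classical
  set a : Fin (n + 1) := ⟨n - 1, by omega⟩ with ha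
  set b : Fin (n + 1) := ⟨n, by omega⟩ with hb
  have hab : a ≠ b := by
    intro h
    have := congrArg Fin.val h
    simp only [ha, hb] at this
    omega
  have hbg : b ∉ g.vars := by
    intro h
    have := hg b h
    simp only [hb] at this
    omega
  have hXY : ∀ j : ℕ, ((MvPolynomial.X a * MvPolynomial.X b : MvPolynomial (Fin (n + 1)) k)) ^ j =
      MvPolynomial.monomial (Finsupp.single a j + Finsupp.single b j) 1 := by
    intro j
    rw [mul_pow, MvPolynomial.X_pow_eq_monomial, MvPolynomial.X_pow_eq_monomial,
      MvPolynomial.monomial_mul, one_mul]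
  generalize p - 1 = N
  rw [add_pow, MvPolynomial.coeff_sum, Finset.sum_eq_single 0]
  · rw [hXY]
    simp
  · intro m hm hm0
    have hmN : m ≤ N := by simpa [Nat.lt_succ_iff] using hm
    rw [← nsmul_eq_mul', MvPolynomial.coeff_smul, hXY, MvPolynomial.coeff_mul_monomial']
    split_ifs with h
    · have : MvPolynomial.coeff (Finsupp.single a N + Finsupp.single b N -
          (Finsupp.single a (N - m) + Finsupp.single b (N - m))) (g ^ m) = 0 := by
        by_contra hc
        apply hbg
        apply MvPolynomial.vars_pow g m
        rw [MvPolynomial.mem_vars]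
        refine ⟨_, MvPolynomial.mem_support_iff.mpr hc, ?_⟩
        rw [Finsupp.mem_support_iff]
        simp [hab]
        omega
      rw [this]
      simp
    · simp
  · simp
end

section
/- Let k be a field of characteristic p > 0, n ≥ 2, and let g be a polynomial in k[x₀, …, x_n] which involves only the variables x₀, …, x_{n−2}. Set f = g + x_{n−1}·x_n. Then f^{p−1} does not belong to the ideal of k[x₀, …, x_n] generated by x₀^p, x₁^p, …, x_n^p. -/
/-- Let `k` be a field of characteristic `p > 0`, `n ≥ 2`, and `g ∈ k[x₀,…,xₙ]` a polynomial
involving only the variables `x₀, …, x_{n-2}`. Set `f = g + x_{n-1} * xₙ`. Then `f^(p-1)` does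
not lie in the ideal generated by `x₀^p, …, xₙ^p`. -/
theorem pow_not_mem_frobenius_power (k : Type*) [Field k] (p n : ℕ) [Fact p.Prime] [CharP k p]
    (hn : 2 ≤ n) (g : MvPolynomial (Fin (n + 1)) k) (hg : ∀ i ∈ g.vars, (i : ℕ) + 2 ≤ n) :
    (g + MvPolynomial.X ⟨n - 1, by omega⟩ * MvPolynomial.X ⟨n, by omega⟩) ^ (p - 1) ∉
      Ideal.span (Set.range fun i : Fin (n + 1) => MvPolynomial.X i ^ p) := by
  have hp : 1 < p := (Fact.out : p.Prime).one_lt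
  set a : Fin (n + 1) := ⟨n - 1, by omega⟩ with ha
  set b : Fin (n + 1) := ⟨n, by omega⟩ with hb
  have hab : a ≠ b := by
    intro h
    have := congrArg Fin.val h
    simp only [ha, hb] at this
    omega
  have hgb : MvPolynomial.degreeOf b g = 0 := by
    by_contra h
    have h1 : b ∈ g.vars := by
      rw [MvPolynomial.vars_def, Multiset.mem_toFinset, ← Multiset.count_ne_zero]
      rwa [MvPolynomial.degreeOf_def] at h
    have := hg b h1
    simp only [hb] at this
    omega
  have hxy : MvPolynomial.degreeOf b
      (MvPolynomial.X a * MvPolynomial.X b : MvPolynomial (Fin (n + 1)) k) ≤ 1 := by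
    refine (MvPolynomial.degreeOf_mul_le _ _ _).trans ?_
    rw [MvPolynomial.degreeOf_X, MvPolynomial.degreeOf_X]
    simp [hab.symm]
  set m : Fin (n + 1) →₀ ℕ := Finsupp.single a (p - 1) + Finsupp.single b (p - 1) with hm
  have hmb : m b = p - 1 := by simp [hm, hab]
  have hmlt : ∀ i, m i < p := by
    intro i
    simp only [hm, Finsupp.add_apply, Finsupp.single_apply]
    split_ifs with h1 h2
    · exact absurd (h1.trans h2.symm) hab
    all_goals omega
  have hcoeff : MvPolynomial.coeff m
      ((g + MvPolynomial.X a * MvPolynomial.X b) ^ (p - 1)) = 1 := by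
    rw [add_pow, MvPolynomial.coeff_sum, Finset.sum_eq_single 0]
    · have : (MvPolynomial.X a * MvPolynomial.X b : MvPolynomial (Fin (n + 1)) k) ^ (p - 1)
          = MvPolynomial.monomial m 1 := by
        rw [mul_pow, MvPolynomial.X_pow_eq_monomial, MvPolynomial.X_pow_eq_monomial,
          MvPolynomial.monomial_mul, one_mul]
      simp [this]
    · intro j hj hj0
      have hj' := Finset.mem_range.mp hj
      by_contra hc
      have h1 := MvPolynomial.monomial_le_degreeOf b (MvPolynomial.mem_support_iff.mpr hc)
      have h2 := MvPolynomial.degreeOf_pow_le b g j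
      have h3 := MvPolynomial.degreeOf_pow_le b
        (MvPolynomial.X a * MvPolynomial.X b : MvPolynomial (Fin (n + 1)) k) (p - 1 - j)
      have h4 := Nat.mul_le_mul_left (p - 1 - j) hxy
      have h5 := MvPolynomial.degreeOf_mul_le b (g ^ j)
        ((MvPolynomial.X a * MvPolynomial.X b) ^ (p - 1 - j))
      have h6 := MvPolynomial.degreeOf_mul_le b (g ^ j *
        (MvPolynomial.X a * MvPolynomial.X b) ^ (p - 1 - j))
        ((((p - 1).choose j : ℕ) : MvPolynomial (Fin (n + 1)) k))
      have h7 : MvPolynomial.degreeOf b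
          ((((p - 1).choose j : ℕ) : MvPolynomial (Fin (n + 1)) k)) = 0 := by
        rw [← map_natCast (MvPolynomial.C : k →+* MvPolynomial (Fin (n + 1)) k)]
        exact MvPolynomial.degreeOf_C _ _
      rw [hgb, mul_zero] at h2
      omega
    · simp
  intro hmem
  have hset : (Set.range fun i : Fin (n + 1) => (MvPolynomial.X i ^ p : MvPolynomial _ k)) =
      (fun s => MvPolynomial.monomial s (1 : k)) ''
        (Set.range fun i : Fin (n + 1) => Finsupp.single i p) := by
    rw [← Set.range_comp]
    congr 1
    funext i
    simp [MvPolynomial.X_pow_eq_monomial]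
  rw [hset, MvPolynomial.mem_ideal_span_monomial_image] at hmem
  obtain ⟨s, ⟨i, rfl⟩, hle⟩ := hmem m (by
    rw [MvPolynomial.mem_support_iff, hcoeff]; exact one_ne_zero)
  have h1 := hle i
  have h2 := hmlt i
  simp only [Finsupp.single_eq_same] at h1
  omega
end

section
/- Let A be the additive submonoid of ℚ generated by 8, 9, 10, 11 (so A = {8a+9b+10c+11d : a,b,c,d ∈ ℕ}). For e ∈ {1,2}, define B_e := {m ∈ ℚ : 2^e·m ∈ A and there exists m' ∈ ℚ with 2^e·m' ∈ A, m − m' ∈ ℤ, and m' < m}, and C_e := {c ∈ ℚ : there exist m, m' ∈ ℚ with 2^e·m ∈ A, 2^e·m' ∈ A, m' ∉ B_e, c = m − m', m − m' ∈ ℤ, and m' < m}. Then 1 ∈ C_1 and 1 ∉ C_2. -/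
/-- The additive submonoid of `ℚ` generated by `8, 9, 10, 11`. -/
def A8911 : AddSubmonoid ℚ := AddSubmonoid.closure {8, 9, 10, 11}

/-- `B e = {m ∈ (1/2^e)A | ∃ m' ∈ (1/2^e)A, m - m' ∈ ℤ, m' < m}`. -/
def B8911 (e : ℕ) : Set ℚ :=
  {m : ℚ | (2 ^ e : ℚ) * m ∈ A8911 ∧
    ∃ m' : ℚ, (2 ^ e : ℚ) * m' ∈ A8911 ∧ (∃ z : ℤ, m - m' = (z : ℚ)) ∧ m' < m}

/-- `C e = {m - m' | m ∈ (1/2^e)A, m' ∈ (1/2^e)A \ B e, m - m' ∈ ℤ, m' < m}`. -/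
def C8911 (e : ℕ) : Set ℚ :=
  {c : ℚ | ∃ m m' : ℚ, (2 ^ e : ℚ) * m ∈ A8911 ∧ (2 ^ e : ℚ) * m' ∈ A8911 ∧
    m' ∉ B8911 e ∧ c = m - m' ∧ (∃ z : ℤ, m - m' = (z : ℚ)) ∧ m' < m}


theorem A8911_sub {x : ℚ} (hx : x ∈ A8911) :
    ∃ n : ℕ, x = n ∧ (n = 0 ∨ (8 ≤ n ∧ n ≤ 11) ∨ 16 ≤ n) := by
  unfold A8911 at hx
  induction hx using AddSubmonoid.closure_induction with
  | mem x h =>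
    simp only [Set.mem_insert_iff, Set.mem_singleton_iff] at h
    rcases h with h | h | h | h
    · exact ⟨8, by simp [h], by omega⟩
    · exact ⟨9, by simp [h], by omega⟩
    · exact ⟨10, by simp [h], by omega⟩
    · exact ⟨11, by simp [h], by omega⟩
  | zero => exact ⟨0, by simp, by omega⟩
  | add x y _ _ hx hy =>
    obtain ⟨n, rfl, hn⟩ := hx
    obtain ⟨k, rfl, hk⟩ := hy
    exact ⟨n + k, by push_cast; ring, by omega⟩

theorem A8911_gen {n : ℕ} (h : 8 ≤ n) (h' : n ≤ 11) : (n : ℚ) ∈ A8911 := by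
  apply AddSubmonoid.subset_closure
  interval_cases n <;> simp

/-- For the monomial curve `Spec k[t⁸,t⁹,t¹⁰,t¹¹]` in characteristic `2`: `1 ∈ C 1`
(the first F-blowup is smooth) but `1 ∉ C 2` (the second F-blowup is not), so the second
F-blowup does not dominate the first. -/
theorem one_mem_C_one_not_mem_C_two : (1 : ℚ) ∈ C8911 1 ∧ (1 : ℚ) ∉ C8911 2 := by
  constructor
  · refine ⟨11 / 2, 9 / 2, ?_, ?_, ?_, by norm_num, ⟨1, by norm_num⟩, by norm_num⟩
    · have := A8911_gen (n := 11) (by norm_num) (by norm_num)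
      norm_num at this ⊢
      exact this
    · have := A8911_gen (n := 9) (by norm_num) (by norm_num)
      norm_num at this ⊢
      exact this
    · rintro ⟨_, m, hm, ⟨z, hz⟩, hlt⟩
      obtain ⟨n, hn, hn'⟩ := A8911_sub hm
      have h1 : (9 : ℚ) - n = 2 * z := by linarith
      have h2 : (n : ℚ) < 9 := by linarith
      have h3 : (9 : ℤ) - n = 2 * z := by exact_mod_cast h1
      have h4 : n < 9 := by exact_mod_cast h2
      omega
  · rintro ⟨m, m', hm, hm', hB, hc, -, -⟩
    obtain ⟨k, hk, hk'⟩ := A8911_sub hm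
    obtain ⟨n, hn, hn'⟩ := A8911_sub hm'
    have h1 : (k : ℚ) = n + 4 := by linarith
    have h2 : k = n + 4 := by exact_mod_cast h1
    have h16 : 16 ≤ n := by omega
    apply hB
    obtain ⟨r, q, hr, hr', hq, hnr⟩ : ∃ r q : ℕ, 8 ≤ r ∧ r ≤ 11 ∧ 0 < q ∧ n = r + 4 * q :=
      ⟨8 + n % 4, n / 4 - 2, by omega, by omega, by omega, by omega⟩
    have hnr' : (n : ℚ) = r + 4 * q := by exact_mod_cast hnr
    have hq' : (0 : ℚ) < q := by exact_mod_cast hq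
    refine ⟨hm', r / 4, ?_, ⟨q, ?_⟩, ?_⟩
    · have := A8911_gen hr hr'
      convert this using 1
      ring
    · push_cast
      linarith
    · linarith
end

section
/- Let A be the additive submonoid of ℚ generated by 2 and 3 (so A = {2a+3b : a,b ∈ ℕ} = {0,2,3,4,5,…}). For e ∈ {1,2}, define B_e := {m ∈ ℚ : 2^e·m ∈ A and there exists m' ∈ ℚ with 2^e·m' ∈ A, m − m' ∈ ℤ, and m' < m}. Then 3/2 ∈ B_2 and 2·(3/2) ∈ A, but 3/2 ∉ B_1; in particular B_1 ≠ B_2 ∩ {m ∈ ℚ : 2·m ∈ A}. -/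
/-- The additive submonoid of `ℚ` generated by `2` and `3`. -/
def A23 : AddSubmonoid ℚ := AddSubmonoid.closure {2, 3}

/-- `B e = {m ∈ (1/2^e)A | ∃ m' ∈ (1/2^e)A, m - m' ∈ ℤ, m' < m}`. -/
def B23 (e : ℕ) : Set ℚ :=
  {m : ℚ | (2 ^ e : ℚ) * m ∈ A23 ∧
    ∃ m' : ℚ, (2 ^ e : ℚ) * m' ∈ A23 ∧ (∃ z : ℤ, m - m' = (z : ℚ)) ∧ m' < m}

theorem A23_mem_form {x : ℚ} (hx : x ∈ A23) : ∃ a b : ℕ, x = 2 * a + 3 * b := by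
  unfold A23 at hx
  induction hx using AddSubmonoid.closure_induction with
  | mem x h =>
    rcases h with h | h
    · exact ⟨1, 0, by rw [h]; norm_num⟩
    · exact ⟨0, 1, by rw [Set.mem_singleton_iff.mp h]; norm_num⟩
  | zero => exact ⟨0, 0, by norm_num⟩
  | add x y _ _ h1 h2 =>
    obtain ⟨a, b, rfl⟩ := h1
    obtain ⟨c, d, rfl⟩ := h2
    exact ⟨a + c, b + d, by push_cast; ring⟩

/-- For the cuspidal curve `Spec k[t²,t³]` in characteristic `2`: `3/2 ∈ B 2`, `2·(3/2) ∈ A`,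
but `3/2 ∉ B 1`; in particular `B 1 ≠ B 2 ∩ (1/2)A`, so Condition (*) fails even though the
F-blowup sequence is monotone. -/
theorem condition_star_fails :
    (3 / 2 : ℚ) ∈ B23 2 ∧ (2 : ℚ) * (3 / 2) ∈ A23 ∧ (3 / 2 : ℚ) ∉ B23 1 ∧
      B23 1 ≠ B23 2 ∩ {m : ℚ | (2 : ℚ) * m ∈ A23} := by
  have h2 : (2 : ℚ) ∈ A23 := AddSubmonoid.subset_closure (by simp)
  have h3 : (3 : ℚ) ∈ A23 := AddSubmonoid.subset_closure (by simp)
  have hB2 : (3 / 2 : ℚ) ∈ B23 2 := by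
    refine ⟨?_, 1 / 2, ?_, ⟨1, by norm_num⟩, by norm_num⟩
    · have h := A23.add_mem h3 h3
      norm_num at h ⊢
      exact h
    · norm_num
      exact h2
  have hA : (2 : ℚ) * (3 / 2) ∈ A23 := by
    norm_num
    exact h3
  have hB1 : (3 / 2 : ℚ) ∉ B23 1 := by
    rintro ⟨-, m', hm, ⟨z, hz⟩, hlt⟩
    obtain ⟨a, b, hab⟩ := A23_mem_form hm
    have e1 : (3 : ℚ) - 2 * z = 2 * a + 3 * b := by
      rw [← hab, ← hz]; ring
    have e2 : (3 : ℤ) - 2 * z = 2 * a + 3 * b := by exact_mod_cast e1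
    have e3 : (0 : ℚ) < z := by rw [← hz]; linarith
    have e4 : 0 < z := by exact_mod_cast e3
    omega
  refine ⟨hB2, hA, hB1, fun h => hB1 ?_⟩
  rw [h]
  exact ⟨hB2, hA⟩
end
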